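/- Let R = x^32 - 4x^31 - 62x^30 + 558x^29 - 248x^28 - 23560x^27 + 143499x^26 + 59489x^25 - 4280108x^24 + 17190864x^23 + 12517459x^22 - 344750256x^21 + 1225662500x^20 - 278789479x^19 - 14790203106x^18 + 64357190741x^17 - 83774789980x^16 - 406418167694x^15 + 2480836111912x^14 - 5273524311353x^13 - 3257558862543x^12 + 54285321863574x^11 - 162450534558477x^10 + 197719989210108x^9 + 250865100757790x^8 - 1714511602191278x^7 + 4206562171750919x^6 - 6661579151098950x^5 + 7460752526582377x^4 - 5959749341609879x^3 + 3269911760551427x^2 - 1113936554991727x + 178725601175511 ∈ ℚ[x], which is irreducible, and let K = ℚ[x]/(R) be the number field it defines. The discriminant of K over ℚ equals -31^49. -/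

import Mathlib

open Polynomial

noncomputable def R : Polynomial ℚ :=
  X^32 - 4*X^31 - 62*X^30 + 558*X^29 - 248*X^28 - 23560*X^27 + 143499*X^26 + 59489*X^25 - 4280108*X^24 + 17190864*X^23 + 12517459*X^22 - 344750256*X^21 + 1225662500*X^20 - 278789479*X^19 - 14790203106*X^18 + 64357190741*X^17 - 83774789980*X^16 - 406418167694*X^15 + 2480836111912*X^14 - 5273524311353*X^13 - 3257558862543*X^12 + 54285321863574*X^11 - 162450534558477*X^10 + 197719989210108*X^9 + 250865100757790*X^8 - 1714511602191278*X^7 + 4206562171750919*X^6 - 6661579151098950*X^5 + 7460752526582377*X^4 - 5959749341609879*X^3 + 3269911760551427*X^2 - 1113936554991727*X + 178725601175511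

/-! Computing the discriminant of `R` by Euclid's algorithm gives `disc R = -31 ^ 49 * D ^ 2`. Since
`disc R = n ^ 2 * disc K`, where `n` is the index of `ℤ[θ]` in the ring of integers of `K = ℚ(θ)`,
it suffices to show that `D ∣ n` and `31 ∤ n`.

For the first, there is an integer `a` with `D ^ 2 ∣ R(a)` and `D ∣ R'(a)`. Then
`g = R(θ) / (θ - a)`, meaning the quotient polynomial at `θ`, satisfies a quadratic equation showing
that `g / D` is integral; its coordinate along `θ ^ 31` is `1 / D`, hence `D ∣ n`. For the second,
`R` splits modulo `31`, with the root `20` of multiplicity `31` and the simple root `4`, and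
`31 ^ 2 ∤ R(20)`: this is Dedekind's criterion for `ℤ[θ]` to be maximal at `31`.
-/

section PowerBasis

variable {K L : Type*} [Field K] [Field L] [Algebra K L] [Algebra.IsSeparable K L]

theorem prod_algHom_apply_gen {E M : Type*} [Field E] [Algebra K E] [CommMonoid M]
    (pb : PowerBasis K L) [Fintype (L →ₐ[K] E)] (φ : E → M) :
    ∏ σ : L →ₐ[K] E, φ (σ pb.gen) = (((minpoly K pb.gen).aroots E).map φ).prod := by
  classical
  have hnodup : ((minpoly K pb.gen).aroots E).Nodup :=
    nodup_roots (Separable.map (Algebra.IsSeparable.isSeparable K pb.gen))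
  rw [Fintype.prod_equiv pb.liftEquiv' (fun σ ↦ φ (σ pb.gen)) (fun x ↦ φ x) fun σ ↦ by simp,
    Finset.prod_mem_multiset _ _ φ fun _ ↦ rfl, Finset.prod_eq_multiset_prod,
    Multiset.toFinset_val, hnodup.dedup]

theorem norm_aeval_gen_eq_resultant (pb : PowerBasis K L) {g : K[X]} {n : ℕ}
    (hg : g.natDegree ≤ n) :
    Algebra.norm K (aeval pb.gen g) =
      resultant (minpoly K pb.gen) g (minpoly K pb.gen).natDegree n := by
  have := pb.finite
  let E := AlgebraicClosure K
  have hmonic := (minpoly.monic pb.isIntegral_gen).map (algebraMap K E)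
  apply (algebraMap K E).injective
  rw [← resultant_map_map, ← natDegree_map (algebraMap K E),
    resultant_eq_prod_eval _ _ _ (natDegree_map_le.trans hg) (IsAlgClosed.splits _),
    hmonic.leadingCoeff, one_pow, one_mul, Algebra.norm_eq_prod_embeddings K E]
  simp only [eval_map_algebraMap, ← aeval_algHom_apply]
  exact prod_algHom_apply_gen pb fun x ↦ aeval x g

theorem discr_powerBasis_eq_discr_minpoly (pb : PowerBasis K L) :
    Algebra.discr K pb.basis = (minpoly K pb.gen).discr := by
  have := pb.finite
  have hdeg : (minpoly K pb.gen).natDegree = Module.finrank K L := by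
    rw [pb.natDegree_minpoly, pb.finrank]
  have hsign (k : ℕ) : (-1 : K) ^ k * (-1) ^ k = 1 := by simp [← mul_pow]
  rw [Algebra.discr_powerBasis_eq_norm,
    norm_aeval_gen_eq_resultant pb (natDegree_derivative_le (minpoly K pb.gen)),
    resultant_deriv (minpoly.degree_pos pb.isIntegral_gen),
    (minpoly.monic pb.isIntegral_gen).leadingCoeff, mul_one, hdeg, ← mul_assoc, hsign, one_mul]

theorem discr_minpoly_ne_zero (pb : PowerBasis K L) : (minpoly K pb.gen).discr ≠ 0 := by
  have := pb.finite
  rw [← discr_powerBasis_eq_discr_minpoly]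
  exact Algebra.discr_not_zero_of_basis K pb.basis

end PowerBasis

open scoped NumberField

section Index

/-- The index of the additive group of `ℤ[θ]` in that of `A` (which is `0` when infinite). -/
noncomputable def adjoinIndex {A : Type*} [CommRing A] (θ : A) : ℕ :=
  (Subalgebra.toSubmodule (Algebra.adjoin ℤ {θ})).toAddSubgroup.index

theorem discr_eq_index_sq_mul_discr {ι A : Type*} [Fintype ι] [DecidableEq ι] [CommRing A]
    (N : Submodule ℤ A) (bN : Module.Basis ι ℤ N) (b : Module.Basis ι ℤ A) :
    Algebra.discr ℤ (fun i ↦ (bN i : A)) = (N.toAddSubgroup.index : ℤ) ^ 2 * Algebra.discr ℤ b := by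
  rw [← b.toMatrix_map_vecMul (fun i ↦ (bN i : A)), Algebra.discr_of_matrix_vecMul,
    AddSubgroup.index_eq_natAbs_det b N.toAddSubgroup bN, Int.natAbs_sq, Module.Basis.det_apply]

theorem intCast_discr_eq_discr_coe {K ι : Type*} [Field K] [NumberField K] [Fintype ι]
    [DecidableEq ι] (v : ι → 𝓞 K) :
    (Algebra.discr ℤ v : ℚ) = Algebra.discr ℚ (fun i ↦ (v i : K)) := by
  rw [Algebra.discr_def, Algebra.discr_def, Int.cast_det]
  congr 1
  ext i j
  simp [Algebra.traceMatrix_apply, Algebra.traceForm_apply, Algebra.coe_trace_int]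

theorem discr_minpoly_eq_adjoinIndex_sq_mul_discr {K : Type*} [Field K] [NumberField K]
    (pb : PowerBasis ℚ K) {θ : 𝓞 K} (hθ : (θ : K) = pb.gen) :
    (minpoly ℚ pb.gen).discr = (adjoinIndex θ : ℚ) ^ 2 * NumberField.discr K := by
  have hint : IsIntegral ℤ θ := θ.isIntegral
  let pbθ := Algebra.adjoin.powerBasis' hint
  have hrank : Module.finrank ℤ (𝓞 K) = pbθ.dim := by
    rw [NumberField.RingOfIntegers.rank, pb.finrank, ← pb.natDegree_minpoly, ← hθ,
      minpoly.isIntegrallyClosed_eq_field_fractions ℚ K hint,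
      (minpoly.monic hint).natDegree_map]
    rfl
  let b := Module.finBasisOfFinrankEq ℤ (𝓞 K) hrank
  rw [← discr_powerBasis_eq_discr_minpoly, ← NumberField.discr_eq_discr K b, adjoinIndex]
  have hgen : ((pbθ.gen : 𝓞 K) : K) = pb.gen := by rw [Algebra.adjoin.powerBasis'_gen, hθ]
  have hdim : pb.dim = pbθ.dim := by
    rw [← hrank, NumberField.RingOfIntegers.rank, pb.finrank]
  have hbasis : (fun i ↦ ((pbθ.basis i : 𝓞 K) : K)) = pb.basis ∘ (finCongr hdim).symm := by
    ext i
    simp [← hgen]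
  have h := discr_eq_index_sq_mul_discr (Subalgebra.toSubmodule (Algebra.adjoin ℤ {θ})) pbθ.basis b
  have hcast := intCast_discr_eq_discr_coe (K := K) fun i ↦ (pbθ.basis i : 𝓞 K)
  rw [hbasis, Algebra.discr_reindex, h] at hcast
  exact_mod_cast hcast.symm

theorem adjoinIndex_ne_zero {K : Type*} [Field K] [NumberField K] (pb : PowerBasis ℚ K) {θ : 𝓞 K}
    (hθ : (θ : K) = pb.gen) : adjoinIndex θ ≠ 0 := by
  intro h
  refine discr_minpoly_ne_zero pb ?_
  rw [discr_minpoly_eq_adjoinIndex_sq_mul_discr pb hθ, h, Nat.cast_zero, zero_pow two_ne_zero,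
    zero_mul]

end Index

section LinearFactor

variable {S A : Type*} [CommRing S] [CommRing A] [Algebra S A] {θ : A}

theorem sub_mul_aeval_divByMonic {f : S[X]} (hf : aeval θ f = 0) (a : S) :
    (θ - algebraMap S A a) * aeval θ (f /ₘ (X - C a)) = -algebraMap S A (f.eval a) := by
  have h := congrArg (aeval θ) (modByMonic_add_div f (X - C a))
  rw [modByMonic_X_sub_C_eq_C_eval, map_add, map_mul, map_sub, aeval_X, aeval_C, aeval_C, hf] at h
  exact eq_neg_of_add_eq_zero_right h

theorem sub_dvd_aeval_divByMonic_sub (f : S[X]) (a : S) :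
    θ - algebraMap S A a ∣
      aeval θ (f /ₘ (X - C a)) - algebraMap S A (f.derivative.eval a) := by
  have heval : (f /ₘ (X - C a)).eval a = f.derivative.eval a := by
    rw [← divByMonic_add_X_sub_C_mul_derivative_divByMonic_eq_derivative f a]
    simp
  have h := map_dvd (aeval θ) (X_sub_C_dvd_sub_C_eval (p := f /ₘ (X - C a)) (a := a))
  simpa only [map_sub, aeval_X, aeval_C, heval] using h

end LinearFactor

section DoubleRoot

variable {A : Type*} [CommRing A] [IsDomain A]

-- `g / d` is a root of the monic polynomial `X ^ 2 - s * X + t`.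
theorem dvd_of_sq_eq_mul_sub_sq_mul [IsIntegrallyClosed A] {d g s t : A}
    (h : g ^ 2 = d * s * g - d ^ 2 * t) : d ∣ g := by
  obtain rfl | hd := eq_or_ne d 0
  · simpa using h
  have hdF : algebraMap A (FractionRing A) d ≠ 0 := by simpa using hd
  have hF := congrArg (algebraMap A (FractionRing A)) h
  simp only [map_mul, map_sub, map_pow] at hF
  have hint : IsIntegral A (algebraMap A (FractionRing A) g / algebraMap A (FractionRing A) d) := by
    refine ⟨X ^ 2 - C s * X + C t, by monicity!, ?_⟩
    simp only [eval₂_add, eval₂_sub, eval₂_mul, eval₂_pow, eval₂_X, eval₂_C]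
    field_simp
    linear_combination hF
  obtain ⟨w, hw⟩ := IsIntegrallyClosed.isIntegral_iff.1 hint
  refine ⟨w, IsFractionRing.injective A (FractionRing A) ?_⟩
  rw [map_mul, hw, mul_div_cancel₀ _ hdF]

theorem dvd_aeval_divByMonic_of_sq_dvd_eval [IsIntegrallyClosed A] {S : Type*} [CommRing S]
    [Algebra S A] {θ : A} {f : S[X]} (hf : aeval θ f = 0) {a d : S} (h₀ : d ^ 2 ∣ f.eval a)
    (h₁ : d ∣ f.derivative.eval a) : algebraMap S A d ∣ aeval θ (f /ₘ (X - C a)) := by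
  obtain ⟨m, hm⟩ := h₀
  obtain ⟨s, hs⟩ := h₁
  obtain ⟨q, hq⟩ := sub_dvd_aeval_divByMonic_sub (θ := θ) f a
  have hfθ := sub_mul_aeval_divByMonic hf a
  rw [hm, map_mul, map_pow] at hfθ
  rw [hs, map_mul] at hq
  refine dvd_of_sq_eq_mul_sub_sq_mul (s := algebraMap S A s) (t := algebraMap S A m * q) ?_
  linear_combination aeval θ (f /ₘ (X - C a)) * hq + q * hfθ

variable [CharZero A] {θ : A}

-- With `n` the index, `n * (g(θ) / d) = P(θ)` for some `P : ℤ[X]` of degree below that of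
-- `minpoly ℤ θ`; then `n * g = d * P`, and the claim is read off the leading coefficient of `g`.
theorem dvd_adjoinIndex_of_dvd_aeval (hθ : IsIntegral ℤ θ) {g : ℤ[X]} (hg : g.Monic)
    (hdeg : g.degree < (minpoly ℤ θ).degree) {d : ℤ} (hd : (d : A) ∣ aeval θ g) :
    d ∣ adjoinIndex θ := by
  obtain ⟨w, hw⟩ := hd
  have hmem : adjoinIndex θ • w ∈ Algebra.adjoin ℤ {θ} :=
    (Subalgebra.toSubmodule (Algebra.adjoin ℤ {θ})).toAddSubgroup.nsmul_index_mem w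
  obtain ⟨P, hP⟩ := Algebra.adjoin_mem_exists_aeval ℤ θ hmem
  have hPdeg := degree_modByMonic_lt P (minpoly.monic hθ)
  have hPθ : aeval θ (P %ₘ minpoly ℤ θ) = adjoinIndex θ * w := by
    rw [aeval_modByMonic_eq_self_of_root (minpoly.aeval ℤ θ), hP, nsmul_eq_mul]
  have hdvd : minpoly ℤ θ ∣ (adjoinIndex θ : ℤ) • g - d • (P %ₘ minpoly ℤ θ) := by
    refine minpoly.isIntegrallyClosed_dvd hθ ?_
    rw [map_sub, map_zsmul, map_zsmul, hw, hPθ, zsmul_eq_mul, zsmul_eq_mul, Int.cast_natCast,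
      mul_left_comm, sub_self]
  have hzero := eq_zero_of_dvd_of_degree_lt hdvd <| (degree_sub_le _ _).trans_lt <|
    max_lt ((degree_smul_le _ _).trans_lt hdeg) ((degree_smul_le _ _).trans_lt hPdeg)
  have hcoeff := congrArg (coeff · g.natDegree) (sub_eq_zero.1 hzero)
  simp only [coeff_smul, hg.coeff_natDegree, smul_eq_mul, mul_one] at hcoeff
  exact ⟨_, hcoeff⟩

theorem dvd_adjoinIndex_of_sq_dvd_eval [IsIntegrallyClosed A] (hθ : IsIntegral ℤ θ) {a d : ℤ}
    (h₀ : d ^ 2 ∣ (minpoly ℤ θ).eval a) (h₁ : d ∣ (minpoly ℤ θ).derivative.eval a) :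
    d ∣ adjoinIndex θ := by
  have hmonic := minpoly.monic hθ
  refine dvd_adjoinIndex_of_dvd_aeval hθ ?_ ?_
    (dvd_aeval_divByMonic_of_sq_dvd_eval (minpoly.aeval ℤ θ) h₀ h₁)
  · rw [Monic, leadingCoeff_divByMonic_X_sub_C _ (minpoly.degree_pos hθ).ne', hmonic]
  · refine degree_divByMonic_lt _ _ hmonic.ne_zero ?_
    rw [degree_X_sub_C]
    exact zero_lt_one

end DoubleRoot

section Dedekind

variable {A : Type*} [CommRing A]

theorem span_sub_algebraMap_ne_top {S : Type*} [CommRing S] [IsDomain S] [IsIntegrallyClosed S]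
    [IsDomain A] [Algebra S A] [Module.IsTorsionFree S A] [Algebra.IsIntegral S A] {θ : A}
    {π b : S} (hπ : ¬ IsUnit π) (hb : π ∣ (minpoly S θ).eval b) :
    Ideal.span {algebraMap S A π, θ - algebraMap S A b} ≠ ⊤ := by
  let I := (Ideal.span {π}).comap (evalRingHom b)
  have hI : I ≠ ⊤ := Ideal.comap_ne_top _ (by rwa [Ne, Ideal.span_singleton_eq_top])
  have hker : RingHom.ker (aeval θ : S[X] →ₐ[S] A).toRingHom ≤ I := fun v hv ↦ by
    have hv := minpoly.isIntegrallyClosed_dvd (Algebra.IsIntegral.isIntegral θ) hv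
    exact Ideal.mem_span_singleton.2 (hb.trans (eval_dvd hv))
  have hC : (aeval θ : S[X] →ₐ[S] A).toRingHom.comp C = algebraMap S A := by ext; simp
  have hint : (aeval θ : S[X] →ₐ[S] A).toRingHom.IsIntegral :=
    RingHom.IsIntegral.tower_top C _ fun x ↦ by
      rw [hC]
      exact Algebra.IsIntegral.isIntegral x
  have hmap := mt (Ideal.map_eq_top_iff_of_ker_le _ hker hint).1 hI
  refine ne_top_of_le_ne_top hmap (Ideal.span_le.2 (Set.pair_subset ?_ ?_))
  · simpa using Ideal.mem_map_of_mem (aeval θ).toRingHom (show C π ∈ I by simp [I])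
  · simpa using Ideal.mem_map_of_mem (aeval θ).toRingHom (show X - C b ∈ I by simp [I])

variable {p : ℕ} [Fact p.Prime]

theorem C_dvd_of_map_zmod_eq_zero {u : ℤ[X]} (hu : u.map (Int.castRingHom (ZMod p)) = 0) :
    C (p : ℤ) ∣ u := by
  rw [C_dvd_iff_dvd_coeff]
  intro i
  simpa [ZMod.intCast_zmod_eq_zero_iff_dvd] using congrArg (coeff · i) hu

theorem natCast_dvd_aeval_of_map_mem_span {θ : A} {u v w : ℤ[X]} (hu : (p : A) ∣ aeval θ u)
    (hv : (p : A) ∣ aeval θ v)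
    (hw : w.map (Int.castRingHom (ZMod p)) ∈
      Ideal.span {u.map (Int.castRingHom (ZMod p)), v.map (Int.castRingHom (ZMod p))}) :
    (p : A) ∣ aeval θ w := by
  have hsurj := map_surjective _ (ZMod.ringHom_surjective (Int.castRingHom (ZMod p)))
  obtain ⟨s', t', h⟩ := Ideal.mem_span_pair.1 hw
  obtain ⟨s, rfl⟩ := hsurj s'
  obtain ⟨t, rfl⟩ := hsurj t'
  obtain ⟨z, hz⟩ : C (p : ℤ) ∣ w - (s * u + t * v) :=
    C_dvd_of_map_zmod_eq_zero (by simp [← h])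
  rw [sub_eq_iff_eq_add.1 hz, map_add, map_add, map_mul, map_mul, map_mul]
  exact dvd_add (by simp) (dvd_add (hu.mul_left _) (hv.mul_left _))

-- If `f(θ) / (θ - b) = p * z`, then `f'(b)` and `f(b) / p` lie in the ideal `(p, θ - b)`, which is
-- proper, so `p` divides both.
theorem not_dvd_aeval_minpoly_divByMonic [IsDomain A] [CharZero A] [Algebra.IsIntegral ℤ A] {θ : A}
    {b : ℤ} (hb : (p : ℤ) ∣ (minpoly ℤ θ).eval b)
    (hb' : (p : ℤ) ∣ (minpoly ℤ θ).derivative.eval b → ¬ (p : ℤ) ^ 2 ∣ (minpoly ℤ θ).eval b) :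
    ¬ (p : A) ∣ aeval θ (minpoly ℤ θ /ₘ (X - C b)) := by
  rintro ⟨z, hz⟩
  have hp : Prime (p : ℤ) := Nat.prime_iff_prime_int.1 Fact.out
  have hpA : (p : A) ≠ 0 := by exact_mod_cast hp.ne_zero
  have hI : Ideal.span {(p : A), θ - b} ≠ ⊤ := by
    simpa using span_sub_algebraMap_ne_top (θ := θ) hp.not_isUnit hb
  obtain ⟨t, ht⟩ := hb
  obtain ⟨q, hq⟩ := sub_dvd_aeval_divByMonic_sub (θ := θ) (minpoly ℤ θ) b
  have hfθ := sub_mul_aeval_divByMonic (minpoly.aeval ℤ θ) b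
  rw [hz] at hq hfθ
  simp only [ht, algebraMap_int_eq, eq_intCast, Int.cast_mul, Int.cast_natCast] at hq hfθ
  have htz : (t : A) = -z * (θ - b) := mul_left_cancel₀ hpA (by linear_combination hfθ)
  have hprime {c : ℤ} (hc : (c : A) ∈ Ideal.span {(p : A), θ - b}) : (p : ℤ) ∣ c := by
    by_contra hpc
    obtain ⟨x, y, hxy⟩ := (Prime.coprime_iff_not_dvd hp).2 hpc
    refine hI ((Ideal.eq_top_iff_one _).2 ?_)
    have hxy : (x : A) * p + y * c = 1 := by exact_mod_cast hxy
    rw [← hxy]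
    exact add_mem (Ideal.mul_mem_left _ _ (Ideal.subset_span (by simp))) (Ideal.mul_mem_left _ _ hc)
  have hderiv : (p : ℤ) ∣ (minpoly ℤ θ).derivative.eval b :=
    hprime (Ideal.mem_span_pair.2 ⟨z, -q, by linear_combination hq⟩)
  have htp : (p : ℤ) ∣ t := hprime (Ideal.mem_span_pair.2 ⟨0, -z, by rw [htz]; ring⟩)
  refine hb' hderiv ?_
  rw [ht, sq]
  exact mul_dvd_mul_left _ htp

theorem map_minpoly_dvd_of_dvd_aeval [IsDomain A] [CharZero A] [Algebra.IsIntegral ℤ A] {θ : A}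
    (hsplits : ((minpoly ℤ θ).map (Int.castRingHom (ZMod p))).Splits)
    (hroot : ∀ b < p, (p : ℤ) ∣ (minpoly ℤ θ).eval (b : ℤ) →
      (p : ℤ) ∣ (minpoly ℤ θ).derivative.eval (b : ℤ) → ¬ (p : ℤ) ^ 2 ∣ (minpoly ℤ θ).eval (b : ℤ))
    {u : ℤ[X]} (hu : (p : A) ∣ aeval θ u) :
    (minpoly ℤ θ).map (Int.castRingHom (ZMod p)) ∣ u.map (Int.castRingHom (ZMod p)) := by
  set f := minpoly ℤ θ with hf
  set φ := Int.castRingHom (ZMod p)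
  have hf₀ : f.map φ ≠ 0 := ((minpoly.monic (Algebra.IsIntegral.isIntegral θ)).map φ).ne_zero
  obtain ⟨h, hspan⟩ : ∃ h, Ideal.span {f.map φ, u.map φ} = Ideal.span {h} :=
    ⟨_, (EuclideanDomain.span_gcd _ _).symm⟩
  have hdvd {v : (ZMod p)[X]} (hv : v ∈ Ideal.span {f.map φ, u.map φ}) : h ∣ v := by
    rwa [hspan, Ideal.mem_span_singleton] at hv
  obtain ⟨k, hk⟩ := hdvd (Ideal.subset_span (Set.mem_insert _ _))
  by_cases hunit : IsUnit k
  · rw [hk, hunit.mul_right_dvd]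
    exact hdvd (Ideal.subset_span (Set.mem_insert_of_mem _ rfl))
  obtain ⟨c, hc⟩ : ∃ c, k.eval c = 0 :=
    (hsplits.of_dvd hf₀ (hk ▸ dvd_mul_left _ _)).exists_eval_eq_zero
      (mt isUnit_iff_degree_eq_zero.2 hunit)
  obtain ⟨b, hb, rfl⟩ : ∃ b < p, ((b : ℕ) : ZMod p) = c := ⟨c.val, c.val_lt, by simp⟩
  have hfb : (p : ℤ) ∣ f.eval (b : ℤ) := by
    rw [← ZMod.intCast_zmod_eq_zero_iff_dvd, ← eq_intCast (Int.castRingHom (ZMod p)),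
      ← eval_map_apply, hk, eval_mul, map_natCast, hc, mul_zero]
  refine absurd (natCast_dvd_aeval_of_map_mem_span (u := f) (by simp [hf]) hu ?_)
    (not_dvd_aeval_minpoly_divByMonic hfb (hroot b hb hfb))
  obtain ⟨k', rfl⟩ := dvd_iff_isRoot.2 hc
  rw [hspan, Ideal.mem_span_singleton, map_divByMonic _ (monic_X_sub_C _), hk, Polynomial.map_sub,
    map_X, map_C, eq_intCast, Int.cast_natCast, mul_left_comm,
    mul_divByMonic_cancel_left _ (monic_X_sub_C _)]
  exact dvd_mul_right _ _

theorem not_dvd_adjoinIndex [IsDomain A] [CharZero A] [Algebra.IsIntegral ℤ A] {θ : A}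
    (hindex : adjoinIndex θ ≠ 0)
    (hsplits : ((minpoly ℤ θ).map (Int.castRingHom (ZMod p))).Splits)
    (hroot : ∀ b < p, (p : ℤ) ∣ (minpoly ℤ θ).eval (b : ℤ) →
      (p : ℤ) ∣ (minpoly ℤ θ).derivative.eval (b : ℤ) →
        ¬ (p : ℤ) ^ 2 ∣ (minpoly ℤ θ).eval (b : ℤ)) :
    ¬ p ∣ adjoinIndex θ := by
  intro hdvd
  let N := (Subalgebra.toSubmodule (Algebra.adjoin ℤ {θ})).toAddSubgroup
  have : Finite (A ⧸ N) := Nat.finite_of_card_ne_zero hindex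
  obtain ⟨y, hy⟩ := exists_prime_addOrderOf_dvd_card' p hdvd
  obtain ⟨x, rfl⟩ := QuotientAddGroup.mk_surjective y
  have hx : x ∉ Algebra.adjoin ℤ {θ} := fun hx ↦ (Fact.out : p.Prime).ne_one <| by
    rw [← hy, (QuotientAddGroup.eq_zero_iff (N := N) x).2 hx, addOrderOf_zero]
  have hpx : p • x ∈ Algebra.adjoin ℤ {θ} :=
    (QuotientAddGroup.eq_zero_iff (N := N) _).1 <| by
      rw [QuotientAddGroup.mk_nsmul, ← hy, addOrderOf_nsmul_eq_zero]
  obtain ⟨u, hu⟩ := Algebra.adjoin_mem_exists_aeval ℤ θ hpx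
  rw [nsmul_eq_mul] at hu
  obtain ⟨v', hv'⟩ := map_minpoly_dvd_of_dvd_aeval hsplits hroot ⟨x, hu⟩
  obtain ⟨v, rfl⟩ := map_surjective _ (ZMod.ringHom_surjective (Int.castRingHom (ZMod p))) v'
  obtain ⟨w, hw⟩ : C (p : ℤ) ∣ u - minpoly ℤ θ * v := C_dvd_of_map_zmod_eq_zero (by simp [hv'])
  have hpA : (p : A) ≠ 0 := by exact_mod_cast (Fact.out : p.Prime).ne_zero
  have hxw : aeval θ w = x := mul_left_cancel₀ hpA <| by
    simpa [hu] using (congrArg (aeval θ) hw).symm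
  exact hx (hxw ▸ aeval_mem_adjoin_singleton ℤ θ)

end Dedekind

section Certificate

theorem eq_of_sq_mul_eq_mul_sq {n d c δ : ℤ} (h : c * d ^ 2 = n ^ 2 * δ) (hd : d ≠ 0)
    (hdn : d ∣ n) (hnc : IsCoprime n c) : δ = c := by
  obtain ⟨k, rfl⟩ := hdn
  have hk : k ^ 2 * δ = c := mul_left_cancel₀ (pow_ne_zero 2 hd) (by linear_combination -h)
  have hunit : IsUnit k :=
    hnc.of_mul_left_right.isUnit_of_dvd ((dvd_pow_self k two_ne_zero).trans ⟨δ, hk.symm⟩)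
  rw [← hk, Int.isUnit_sq hunit, one_mul]

variable {K : Type*} [Field K] [NumberField K]

theorem exists_coe_eq_and_minpoly_int_eq {x : K} {f : ℤ[X]}
    (h : minpoly ℚ x = f.map (Int.castRingHom ℚ)) :
    ∃ θ : 𝓞 K, (θ : K) = x ∧ minpoly ℤ θ = f := by
  have hinj : Function.Injective (Int.castRingHom ℚ) := Int.cast_injective
  have hx : IsIntegral ℤ x := by
    refine ⟨f, monic_of_injective hinj (h ▸ minpoly.monic (Algebra.IsIntegral.isIntegral x)), ?_⟩
    rw [← aeval_def, ← aeval_map_algebraMap ℚ, algebraMap_int_eq, ← h, minpoly.aeval]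
  let θ : 𝓞 K := ⟨x, hx⟩
  refine ⟨θ, rfl, map_injective _ hinj ?_⟩
  rw [← h, ← algebraMap_int_eq]
  exact (minpoly.isIntegrallyClosed_eq_field_fractions ℚ K θ.isIntegral).symm

theorem discr_eq_of_isCoprime_adjoinIndex (pb : PowerBasis ℚ K) {θ : 𝓞 K} (hθ : (θ : K) = pb.gen)
    {a c d : ℤ} (hdiscr : (minpoly ℚ pb.gen).discr = c * (d : ℚ) ^ 2)
    (h₀ : d ^ 2 ∣ (minpoly ℤ θ).eval a) (h₁ : d ∣ (minpoly ℤ θ).derivative.eval a)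
    (hcoprime : IsCoprime (adjoinIndex θ : ℤ) c) : NumberField.discr K = c := by
  have hindex := discr_minpoly_eq_adjoinIndex_sq_mul_discr pb hθ
  have hd : d ≠ 0 := by
    rintro rfl
    refine discr_minpoly_ne_zero pb ?_
    rw [hdiscr, Int.cast_zero, zero_pow two_ne_zero, mul_zero]
  rw [hdiscr] at hindex
  exact eq_of_sq_mul_eq_mul_sq (by exact_mod_cast hindex) hd
    (dvd_adjoinIndex_of_sq_dvd_eval θ.isIntegral h₀ h₁) hcoprime

end Certificate

section CoefficientLists

/-- The polynomial with a given list of coefficients, in order of decreasing degree. -/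
noncomputable def ofCoeffs {A : Type*} [Semiring A] : List A → A[X]
  | [] => 0
  | a :: l => C a * X ^ l.length + ofCoeffs l

/-- The coefficient list of the derivative of `ofCoeffs l`. -/
def derivCoeffs {A : Type*} [Semiring A] : List A → List A
  | [] => []
  | [_] => []
  | a :: b :: l => (a * (b :: l).length) :: derivCoeffs (b :: l)

/-- Horner's scheme for the value of `ofCoeffs l` at `x`. -/
def horner {A : Type*} [Semiring A] (x : A) (l : List A) : A :=
  l.foldl (fun y a ↦ y * x + a) 0

theorem degree_ofCoeffs_lt {A : Type*} [Semiring A] (l : List A) :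
    (ofCoeffs l).degree < l.length := by
  induction l with
  | nil => simp [ofCoeffs]
  | cons a l ih =>
    refine (degree_add_le _ _).trans_lt (max_lt ?_ (ih.trans ?_))
    · exact (degree_C_mul_X_pow_le _ _).trans_lt (by norm_cast; simp)
    · norm_cast; simp

theorem natDegree_ofCoeffs_cons_le {A : Type*} [Semiring A] (a : A) (l : List A) :
    (ofCoeffs (a :: l)).natDegree ≤ l.length :=
  natDegree_le_of_degree_le (Order.le_of_lt_succ (degree_ofCoeffs_lt (a :: l)))

theorem monic_ofCoeffs_one_cons {A : Type*} [Semiring A] (l : List A) :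
    (ofCoeffs (1 :: l)).Monic := by
  rw [ofCoeffs, C_1, one_mul]
  exact monic_X_pow_add (degree_ofCoeffs_lt l)

theorem natDegree_ofCoeffs_one_cons {A : Type*} [Semiring A] [Nontrivial A] (l : List A) :
    (ofCoeffs (1 :: l)).natDegree = l.length := by
  rw [ofCoeffs, C_1, one_mul]
  refine natDegree_eq_of_degree_eq_some ?_
  rw [degree_add_eq_left_of_degree_lt] <;> simp [degree_ofCoeffs_lt l]

theorem map_ofCoeffs {A B : Type*} [Semiring A] [Semiring B] (φ : A →+* B) (l : List A) :
    (ofCoeffs l).map φ = ofCoeffs (l.map φ) := by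
  induction l with
  | nil => simp [ofCoeffs]
  | cons a l ih => simp [ofCoeffs, ih]

theorem ofCoeffs_append {A : Type*} [Semiring A] (l₁ l₂ : List A) :
    ofCoeffs (l₁ ++ l₂) = ofCoeffs l₁ * X ^ l₂.length + ofCoeffs l₂ := by
  induction l₁ with
  | nil => simp [ofCoeffs]
  | cons a l₁ ih => simp [ofCoeffs, ih, pow_add, add_mul, mul_assoc, add_assoc]

theorem ofCoeffs_replicate_zero {A : Type*} [Semiring A] (n : ℕ) :
    ofCoeffs (List.replicate n (0 : A)) = 0 := by
  induction n with
  | zero => simp [ofCoeffs]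
  | succ n ih => simp [List.replicate_succ, ofCoeffs, ih]

theorem ofCoeffs_zipWith {A : Type*} [CommRing A] (a : A) {l₁ l₂ : List A}
    (h : l₁.length = l₂.length) :
    ofCoeffs (List.zipWith (· - a * ·) l₁ l₂) = ofCoeffs l₁ - C a * ofCoeffs l₂ := by
  induction l₁ generalizing l₂ with
  | nil => simp [ofCoeffs, List.length_eq_zero_iff.1 h.symm]
  | cons b l₁ ih =>
    obtain _ | ⟨c, l₂⟩ := l₂
    · simp at h
    · have h' : l₁.length = l₂.length := by simpa using h
      simp only [List.zipWith_cons_cons, ofCoeffs, ih h', List.length_zipWith, h', min_self,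
        map_sub, map_mul]
      ring

theorem ofCoeffs_map_div {K : Type*} [Field K] (a : K) (l : List K) :
    ofCoeffs (l.map (· / a)) = C a⁻¹ * ofCoeffs l := by
  induction l with
  | nil => simp [ofCoeffs]
  | cons b l ih =>
    rw [List.map_cons, ofCoeffs, ofCoeffs, ih, List.length_map, div_eq_inv_mul, C_mul]
    ring

theorem eval_ofCoeffs {A : Type*} [CommSemiring A] (x : A) (l : List A) :
    (ofCoeffs l).eval x = horner x l := by
  induction l using List.reverseRecOn with
  | nil => simp [ofCoeffs, horner]
  | append_singleton l a ih =>
    simp only [horner] at ih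
    simp [ofCoeffs_append, ih, ofCoeffs, horner]

theorem length_derivCoeffs {A : Type*} [Semiring A] (l : List A) :
    (derivCoeffs l).length = l.length - 1 := by
  induction l using derivCoeffs.induct with
  | case1 => rfl
  | case2 => rfl
  | case3 a b l ih => simp [derivCoeffs, ih]

theorem derivative_ofCoeffs {A : Type*} [Semiring A] (l : List A) :
    derivative (ofCoeffs l) = ofCoeffs (derivCoeffs l) := by
  induction l using derivCoeffs.induct with
  | case1 => simp [ofCoeffs, derivCoeffs]
  | case2 => simp [ofCoeffs, derivCoeffs]
  | case3 a b l ih =>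
    rw [ofCoeffs, derivative_add, derivative_C_mul_X_pow, ih, derivCoeffs, ofCoeffs,
      length_derivCoeffs]

end CoefficientLists

section Euclid

variable {K : Type*} [Field K]

theorem resultant_ofCoeffs_cons (a : K) (f g : List K) :
    resultant (ofCoeffs (a :: f)) (ofCoeffs (1 :: g)) (f.length + 1) g.length =
      (-1) ^ g.length * resultant (ofCoeffs (a :: f)) (ofCoeffs (1 :: g)) f.length g.length := by
  have hg : (ofCoeffs (1 :: g)).coeff g.length = 1 := by
    simpa [natDegree_ofCoeffs_one_cons] using (monic_ofCoeffs_one_cons g).coeff_natDegree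
  rw [resultant_succ_left_deg _ _ _ _ (natDegree_ofCoeffs_cons_le a f), hg, mul_one]

theorem resultant_ofCoeffs_cons_of_length_le (a : K) {f g : List K} (h : g.length ≤ f.length) :
    resultant (ofCoeffs (a :: f)) (ofCoeffs (1 :: g)) f.length g.length =
      resultant
        (ofCoeffs (List.zipWith (· - a * ·) f (g ++ List.replicate (f.length - g.length) 0)))
        (ofCoeffs (1 :: g)) f.length g.length := by
  have hdiv : ofCoeffs (List.zipWith (· - a * ·) f (g ++ List.replicate (f.length - g.length) 0)) =
      ofCoeffs (a :: f) + ofCoeffs (1 :: g) * (C (-a) * X ^ (f.length - g.length)) := by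
    rw [ofCoeffs_zipWith a (by simp; lia), ofCoeffs_append, ofCoeffs_replicate_zero,
      List.length_replicate, ofCoeffs, ofCoeffs, ← Nat.add_sub_cancel' h, Nat.add_sub_cancel_left,
      pow_add, C_neg, C_1]
    ring
  rw [hdiv, resultant_add_mul_left _ _ _ _ _ _ (natDegree_ofCoeffs_cons_le 1 g)]
  exact Nat.add_le_of_le_sub h (natDegree_C_mul_X_pow_le _ _)

theorem resultant_ofCoeffs_cons_of_ne_zero {a : K} (ha : a ≠ 0) (f g : List K) :
    resultant (ofCoeffs (a :: f)) (ofCoeffs (1 :: g)) f.length g.length =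
      (-1) ^ (f.length * g.length) * a ^ g.length *
        resultant (ofCoeffs (1 :: g)) (ofCoeffs (1 :: f.map (· / a))) g.length f.length := by
  have hf : ofCoeffs (a :: f) = C a * ofCoeffs (1 :: f.map (· / a)) := by
    rw [ofCoeffs, ofCoeffs, ofCoeffs_map_div, mul_add, ← mul_assoc, ← mul_assoc, ← C_mul, ← C_mul,
      mul_one, mul_inv_cancel₀ ha, C_1, one_mul, List.length_map]
  rw [hf, resultant_C_mul_left, resultant_comm]
  ring

variable [DecidableEq K]

/-- Euclid's algorithm for the resultant of `ofCoeffs f`, taken in formal degree `f.length`, and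
the monic polynomial `ofCoeffs (1 :: g)`. Keeping the divisor monic avoids pseudo-division. -/
def euclidResultant : List K → List K → K
  | [], g => 0 ^ g.length
  | a :: f, g =>
    if g.length ≤ f.length then
      (-1) ^ g.length * euclidResultant
        (List.zipWith (· - a * ·) f (g ++ List.replicate (f.length - g.length) 0)) g
    else if a = 0 then
      (-1) ^ g.length * euclidResultant f g
    else
      (-1) ^ (g.length + f.length + f.length * g.length) * a ^ g.length *
        euclidResultant (1 :: g) (f.map (· / a))
termination_by f g => f.length + 2 * g.length
decreasing_by all_goals (simp; try lia)

theorem resultant_eq_euclidResultant (f g : List K) :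
    resultant (ofCoeffs f) (ofCoeffs (1 :: g)) f.length g.length = euclidResultant f g := by
  induction f, g using euclidResultant.induct with
  | case1 g => simp [ofCoeffs, euclidResultant]
  | case2 a f g h ih =>
    rw [euclidResultant, if_pos h, ← ih, List.length_cons, resultant_ofCoeffs_cons,
      resultant_ofCoeffs_cons_of_length_le a h]
    simp [h]
  | case3 f g h ih =>
    rw [euclidResultant, if_neg h, if_pos rfl, ← ih, List.length_cons, resultant_ofCoeffs_cons,
      ofCoeffs, C_0, zero_mul, zero_add]
  | case4 a f g h ha ih =>
    rw [List.map_attach_eq_pmap, List.pmap_eq_map, List.length_cons, resultant_ofCoeffs_cons,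
      List.length_map] at ih
    rw [euclidResultant, if_neg h, if_neg ha, List.length_cons, resultant_ofCoeffs_cons,
      resultant_ofCoeffs_cons_of_ne_zero ha, ← ih]
    have hsign : ((-1 : K) ^ f.length) * (-1) ^ f.length = 1 := by simp [← mul_pow]
    linear_combination -(-1 : K) ^ g.length *
      ((-1) ^ (f.length * g.length) * a ^ g.length *
        resultant (ofCoeffs (1 :: g)) (ofCoeffs (1 :: f.map (· / a))) g.length f.length) * hsign

theorem discr_ofCoeffs_one_cons (l : List K) :
    (ofCoeffs (1 :: l)).discr =
      (-1) ^ (l.length * (l.length + 1) / 2) * euclidResultant (derivCoeffs (1 :: l)) l := by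
  obtain _ | ⟨b, l⟩ := l
  · simpa [ofCoeffs, derivCoeffs, euclidResultant] using discr_C (1 : K)
  obtain ⟨c, f, hf⟩ : ∃ c f, derivCoeffs (1 :: b :: l) = c :: f := ⟨_, _, rfl⟩
  have hlen : f.length = l.length := by simpa [hf] using length_derivCoeffs (1 :: b :: l)
  have hdeg : (ofCoeffs (1 :: b :: l)).natDegree = l.length + 1 := natDegree_ofCoeffs_one_cons _
  have hderiv := resultant_deriv (f := ofCoeffs (1 :: b :: l))
    (natDegree_pos_iff_degree_pos.1 (by lia))
  have heuclid := resultant_eq_euclidResultant (c :: f) (b :: l)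
  rw [List.length_cons, resultant_ofCoeffs_cons, List.length_cons, hlen] at heuclid
  obtain ⟨m, hm⟩ := Nat.even_mul_succ_self l.length
  have hm₁ : (l.length + 1) * l.length / 2 = m := by lia
  have hm₂ : (l.length + 1) * (l.length + 1 + 1) / 2 = m + (l.length + 1) := by lia
  rw [derivative_ofCoeffs, hf, resultant_comm, hdeg, Nat.add_sub_cancel,
    (monic_ofCoeffs_one_cons (b :: l)).leadingCoeff, mul_one, hm₁, mul_comm (l.length + 1), hm,
    pow_add] at hderiv
  rw [hf, List.length_cons, hm₂, ← heuclid, pow_add]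
  have hsign (k : ℕ) : (-1 : K) ^ k * (-1) ^ k = 1 := by simp [← mul_pow]
  generalize resultant (ofCoeffs (c :: f)) (ofCoeffs (1 :: b :: l)) l.length (l.length + 1) = r at *
  calc discr (ofCoeffs (1 :: b :: l))
      = (-1) ^ m * ((-1) ^ m * discr (ofCoeffs (1 :: b :: l))) := by
        rw [← mul_assoc, hsign, one_mul]
    _ = (-1) ^ m * r := by rw [← hderiv, hsign, one_mul]
    _ = _ := by rw [mul_assoc, ← mul_assoc _ _ r, hsign, one_mul]

end Euclid

section Data

/-- The coefficients of `R`, in order of decreasing degree. -/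
def coeffsR : List ℤ :=
  [1, -4, -62, 558, -248, -23560, 143499, 59489, -4280108, 17190864, 12517459, -344750256,
    1225662500, -278789479, -14790203106, 64357190741, -83774789980, -406418167694,
    2480836111912, -5273524311353, -3257558862543, 54285321863574, -162450534558477,
    197719989210108, 250865100757790, -1714511602191278, 4206562171750919, -6661579151098950,
    7460752526582377, -5959749341609879, 3269911760551427, -1113936554991727, 178725601175511]

/-- The index of `ℤ[θ]` in the maximal order, for `θ` a root of `R`, found as the positive integer
with `R.discr = -31 ^ 49 * indexR ^ 2`. -/
def indexR : ℕ :=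
  4621542365037011549881917992698086399551286222805806651455471354485979522288448519053694007704752104441885300303023505233283093106949629952750090124173398979919769161443721248719376749376773603550699287264595080975

/-- A double root of `R` modulo `indexR`: the reduction modulo `indexR` of the zero of the remainder
of degree one in Euclid's algorithm over `ℚ` for `R` and its derivative. -/
def doubleRoot : ℤ :=
  3222794943094601668294333081874817718410041280162640265466874638171676020855476596622631245376561659911630746132581067889234401615162383038333261415115826293386751657189294626544277053321358519964675776576831870416

theorem map_ofCoeffs_coeffsR : (ofCoeffs coeffsR).map (Int.castRingHom ℚ) = R := by
  rw [map_ofCoeffs]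
  simp only [coeffsR, R, ofCoeffs, List.map_cons, List.map_nil, List.length_cons, List.length_nil,
    eq_intCast, Int.cast_one, Int.cast_neg, Int.cast_ofNat, C_1, C_neg, C_ofNat]
  ring

theorem monic_ofCoeffs_coeffsR : (ofCoeffs coeffsR).Monic :=
  monic_ofCoeffs_one_cons coeffsR.tail

theorem discr_R_eq_mul_indexR_sq : R.discr = -31 ^ 49 * (indexR : ℚ) ^ 2 := by
  rw [← map_ofCoeffs_coeffsR, map_ofCoeffs]
  refine (discr_ofCoeffs_one_cons (coeffsR.tail.map (Int.castRingHom ℚ))).trans ?_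
  decide +kernel

theorem indexR_sq_dvd_eval_doubleRoot :
    (indexR : ℤ) ^ 2 ∣ (ofCoeffs coeffsR).eval doubleRoot := by
  rw [eval_ofCoeffs]
  decide +kernel

theorem indexR_dvd_eval_derivative_doubleRoot :
    (indexR : ℤ) ∣ (ofCoeffs coeffsR).derivative.eval doubleRoot := by
  rw [derivative_ofCoeffs, eval_ofCoeffs]
  decide +kernel

instance fact_prime_31 : Fact (Nat.Prime 31) := ⟨by norm_num⟩

theorem splits_map_zmod_31 : ((ofCoeffs coeffsR).map (Int.castRingHom (ZMod 31))).Splits := by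
  have hcoeffs : coeffsR.map (Int.castRingHom (ZMod 31)) =
      1 :: -4 :: (List.replicate 29 0 ++ [-20, 4 * 20]) := by decide +kernel
  have hfrob : (X - C 20 : (ZMod 31)[X]) ^ 31 = X ^ 31 - C 20 := by
    rw [sub_pow_char, ← C_pow, ZMod.pow_card]
  have hfactor : ofCoeffs (coeffsR.map (Int.castRingHom (ZMod 31))) =
      (X - C 20) ^ 31 * (X - C 4) := by
    rw [hcoeffs, hfrob, ofCoeffs, ofCoeffs, ofCoeffs_append, ofCoeffs_replicate_zero]
    simp only [ofCoeffs, List.length_append, List.length_replicate, List.length_cons,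
      List.length_nil, C_1, C_neg, C_mul]
    ring
  rw [map_ofCoeffs, hfactor]
  exact ((Splits.X_sub_C _).pow _).mul (Splits.X_sub_C _)

theorem not_31_sq_dvd_eval_of_dvd_eval_derivative : ∀ b : ℕ, b < 31 →
    ((31 : ℕ) : ℤ) ∣ (ofCoeffs coeffsR).eval (b : ℤ) →
    ((31 : ℕ) : ℤ) ∣ (ofCoeffs coeffsR).derivative.eval (b : ℤ) →
    ¬ ((31 : ℕ) : ℤ) ^ 2 ∣ (ofCoeffs coeffsR).eval (b : ℤ) := by
  simp only [derivative_ofCoeffs, eval_ofCoeffs]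
  decide +kernel

end Data

theorem discr_R (hR : Irreducible R) :
    haveI : Fact (Irreducible R) := ⟨hR⟩
    haveI : CharZero (AdjoinRoot R) :=
      charZero_of_injective_algebraMap (algebraMap ℚ (AdjoinRoot R)).injective
    haveI : FiniteDimensional ℚ (AdjoinRoot R) :=
      (AdjoinRoot.powerBasis hR.ne_zero).finite
    haveI : NumberField (AdjoinRoot R) := ⟨⟩
    NumberField.discr (AdjoinRoot R) = -31 ^ 49 := by
  have : Fact (Irreducible R) := ⟨hR⟩
  have : CharZero (AdjoinRoot R) :=
    charZero_of_injective_algebraMap (algebraMap ℚ (AdjoinRoot R)).injective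
  have : FiniteDimensional ℚ (AdjoinRoot R) :=
    (AdjoinRoot.powerBasis hR.ne_zero).finite
  have : NumberField (AdjoinRoot R) := ⟨⟩
  let pb := AdjoinRoot.powerBasis hR.ne_zero
  have hgen : minpoly ℚ pb.gen = R :=
    AdjoinRoot.minpoly_powerBasis_gen_of_monic (map_ofCoeffs_coeffsR ▸ monic_ofCoeffs_coeffsR.map _)
  obtain ⟨θ, hθ, hmin⟩ := exists_coe_eq_and_minpoly_int_eq (hgen.trans map_ofCoeffs_coeffsR.symm)
  have h31 : ¬ 31 ∣ adjoinIndex θ := by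
    refine not_dvd_adjoinIndex (adjoinIndex_ne_zero pb hθ) ?_ ?_ <;> rw [hmin]
    exacts [splits_map_zmod_31, not_31_sq_dvd_eval_of_dvd_eval_derivative]
  have hcoprime : IsCoprime (adjoinIndex θ : ℤ) (-31 ^ 49) :=
    (Nat.isCoprime_iff_coprime.2
      ((Nat.Prime.coprime_iff_not_dvd Fact.out).2 h31).symm).pow_right.neg_right
  refine discr_eq_of_isCoprime_adjoinIndex pb hθ (a := doubleRoot) (d := indexR) ?_ ?_ ?_ hcoprime
  · rw [hgen, discr_R_eq_mul_indexR_sq]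
    norm_num
  · exact hmin ▸ indexR_sq_dvd_eval_doubleRoot
  · exact hmin ▸ indexR_dvd_eval_derivative_doubleRoot
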